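/- arXiv:2105.08455 — 3 statements merged into one kernel-verified Lean document; each statement's English description precedes it below -/
import Mathlib

section
/- For every integer n ≥ 1, ∑_{π ∈ D_n} (-1)^{inv(π)} t^{exc(π)} = (-1)^{n-1}(t + t^2 + ⋯ + t^{n-1}) as an identity of polynomials in the variable t. -/
open Finset MvPolynomial

/-- Number of inversions of a permutation of `Fin n`
(pairs `p.1 < p.2` with `π p.1 > π p.2`). -/
def inversions {n : ℕ} (π : Equiv.Perm (Fin n)) : ℕ :=
  (Finset.univ.filter fun p : Fin n × Fin n => p.1 < p.2 ∧ π p.2 < π p.1).card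

/-- Excedance indices of a permutation. -/
def EXCi {n : ℕ} (π : Equiv.Perm (Fin n)) : Finset (Fin n) :=
  Finset.univ.filter fun i => i < π i

/-- Excedance values of a permutation. -/
def EXCv {n : ℕ} (π : Equiv.Perm (Fin n)) : Finset (Fin n) :=
  (EXCi π).image π

/-- Right-to-left minima indices of a permutation. -/
def RLMi {n : ℕ} (π : Equiv.Perm (Fin n)) : Finset (Fin n) :=
  Finset.univ.filter fun i => ∀ j, i < j → π i < π j

/-- Right-to-left minima values of a permutation. -/
def RLMv {n : ℕ} (π : Equiv.Perm (Fin n)) : Finset (Fin n) :=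
  (RLMi π).image π

/-- The derangements of `Fin n`, i.e. permutations with no fixed point. -/
def derangementsF (n : ℕ) : Finset (Equiv.Perm (Fin n)) :=
  Finset.univ.filter fun π => ∀ i, π i ≠ i

/-- The matrix whose determinant is the signed excedance sum over derangements. -/
noncomputable def excMat (n : ℕ) : Matrix (Fin n) (Fin n) (Polynomial ℤ) :=
  Matrix.of fun i j => if j < i then Polynomial.X else if i < j then 1 else 0

lemma neg_one_pow_inversions {n : ℕ} (π : Equiv.Perm (Fin n)) :
    ((-1 : Polynomial ℤ) ^ inversions π) = ((Equiv.Perm.sign π : ℤ) : Polynomial ℤ) := by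
  have h : Equiv.Perm.sign π = (-1) ^ inversions π := by
    rw [Equiv.Perm.sign_eq_prod_prod_Ioi, inversions, Finset.prod_sigma', Finset.prod_ite,
      Finset.prod_const_one, one_mul, Finset.prod_const]
    congr 1
    refine Finset.card_bij (fun a _ => (a.1, a.2)) ?_ ?_ ?_
    · rintro ⟨a, b⟩ h
      simp only [Finset.mem_filter, Finset.mem_sigma, Finset.mem_univ, Finset.mem_Ioi, true_and,
        not_lt] at h ⊢
      exact ⟨h.1, lt_of_le_of_ne h.2 fun e => h.1.ne (π.injective e).symm⟩
    · rintro ⟨a, b⟩ _ ⟨c, d⟩ _ h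
      simp only [Prod.mk.injEq] at h
      obtain ⟨rfl, rfl⟩ := h
      rfl
    · rintro ⟨a, b⟩ h
      simp only [Finset.mem_filter, Finset.mem_univ, true_and] at h
      exact ⟨⟨a, b⟩, by simp [h.1, h.2.le], rfl⟩
  rw [h]; simp

lemma sum_eq_det (n : ℕ) :
    ∑ π ∈ derangementsF n,
      ((-1 : Polynomial ℤ) ^ inversions π) * Polynomial.X ^ (EXCi π).card = (excMat n).det := by
  rw [Matrix.det_apply', derangementsF, Finset.sum_filter]
  refine Finset.sum_congr rfl fun π _ => ?_
  split_ifs with h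
  · rw [neg_one_pow_inversions]
    congr 1
    rw [EXCi, ← Finset.prod_const, Finset.prod_filter]
    refine Finset.prod_congr rfl fun i _ => ?_
    have := h i
    simp only [excMat, Matrix.of_apply]
    grind
  · push Not at h
    obtain ⟨i, hi⟩ := h
    rw [Finset.prod_eq_zero (Finset.mem_univ i), mul_zero]
    simp [excMat, hi]

lemma det_rec (n : ℕ) : (excMat (n + 2)).det =
    -(1 + Polynomial.X) * (excMat (n + 1)).det - Polynomial.X * (excMat n).det := by
  have h01 : (0 : Fin (n + 2)) ≠ 1 := by simp
  rw [← Matrix.det_updateRow_add_smul_self (excMat (n + 2)) h01 (-1),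
    ← Matrix.det_updateCol_add_smul_self _ h01 (-1)]
  set B := Matrix.updateCol _ (0 : Fin (n + 2)) _ with hB
  have hss : ∀ i j : Fin (n + 1), B i.succ j.succ = excMat (n + 1) i j := by
    intro i j
    simp [hB, excMat, Matrix.updateRow_apply, Fin.succ_ne_zero]
  have h00 : B 0 0 = -(1 + Polynomial.X) := by
    simp [hB, excMat, Matrix.updateRow_apply]
  have hr1 : B 0 (Fin.succ 0) = 1 := by
    simp [hB, excMat, Matrix.updateRow_apply]
  have hc1 : B (Fin.succ 0) 0 = Polynomial.X := by
    simp [hB, excMat, Matrix.updateRow_apply]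
  have h1s : ∀ j : Fin n, (1 : Fin (n + 2)) < j.succ.succ := by
    intro j; rw [Fin.lt_def]; simp
  have hr : ∀ j : Fin n, B 0 j.succ.succ = 0 := by
    intro j
    simp [hB, excMat, Matrix.updateRow_apply, Fin.succ_ne_zero, h1s,
      (h1s j).not_gt]
  have hc : ∀ j : Fin n, B j.succ.succ 0 = 0 := by
    intro j
    simp [hB, excMat, Matrix.updateRow_apply, Fin.succ_ne_zero, h1s,
      (h1s j).not_gt]
  clear_value B
  have m0 : B.submatrix Fin.succ (Fin.succAbove 0) = excMat (n + 1) := by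
    ext1 i j; simp [hss]
  have m1 : (B.submatrix Fin.succ (Fin.succAbove (Fin.succ 0))).det
      = Polynomial.X * (excMat n).det := by
    rw [Matrix.det_succ_column_zero, Fin.sum_univ_succ, Finset.sum_eq_zero]
    · have : (B.submatrix Fin.succ (Fin.succAbove (Fin.succ 0))).submatrix
          (Fin.succAbove 0) Fin.succ = excMat n := by
        ext1 i j
        simp only [Matrix.submatrix_apply, Fin.succ_succAbove_succ, Fin.succAbove_zero, hss]
        simp [excMat]
      rw [this]
      simp only [Matrix.submatrix_apply, Fin.succ_succAbove_zero, hc1]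
      simp
    · intro j _
      simp only [Matrix.submatrix_apply, Fin.succ_succAbove_zero, hc]
      simp
  rw [Matrix.det_succ_row_zero, Fin.sum_univ_succ, Fin.sum_univ_succ, Finset.sum_eq_zero]
  · rw [m0, m1, h00, hr1]
    simp
    ring
  · intro j _
    simp [hr]

lemma det_formula (n : ℕ) : (excMat (n + 1)).det =
    (-1) ^ n * ∑ k ∈ Finset.range n, (Polynomial.X : Polynomial ℤ) ^ (k + 1) := by
  induction n using Nat.strong_induction_on with
  | _ n ih =>
    match n with
    | 0 => simp [excMat]
    | 1 => rw [det_rec, ih 0 (by simp)]; simp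
    | n + 2 =>
      rw [det_rec, ih (n + 1) (by simp), ih n (by simp)]
      simp only [Finset.sum_range_succ]
      ring

theorem stmt2 (n : ℕ) (hn : 1 ≤ n) :
    ∑ π ∈ derangementsF n,
      ((-1 : Polynomial ℤ) ^ inversions π) * Polynomial.X ^ (EXCi π).card
    = (-1) ^ (n - 1) * ∑ k ∈ Finset.Icc 1 (n - 1), (Polynomial.X : Polynomial ℤ) ^ k := by
  obtain ⟨m, rfl⟩ := Nat.exists_eq_add_of_le' hn
  rw [sum_eq_det, det_formula, Nat.add_sub_cancel, Finset.range_eq_Ico,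
    Finset.sum_Ico_add' (fun k => (Polynomial.X : Polynomial ℤ) ^ k) 0 m 1]
  rfl
end

section
/- For every integer n ≥ 1, ∑_{π ∈ S_n} (-1)^{inv(π)} ∏_{j ∈ EXCi(π)} x_j = ∏_{j=1}^{n-1} (1 - x_j), as an identity of polynomials in the commuting variables x_1,…,x_{n-1}. -/
open Finset MvPolynomial

lemma sign_inversions {n : ℕ} (π : Equiv.Perm (Fin n)) :
    ((Equiv.Perm.sign π : ℤ)) = (-1) ^ inversions π := by
  rw [Equiv.Perm.sign_eq_prod_prod_Ioi]
  unfold inversions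
  rw [← Finset.prod_const, Finset.prod_filter, ← Finset.univ_product_univ, Finset.prod_product]
  simp only [Units.coe_prod]
  refine Finset.prod_congr rfl fun i _ => ?_
  have hI : Finset.Ioi i = Finset.univ.filter fun j => i < j := by ext; simp
  rw [hI, Finset.prod_filter]
  refine Finset.prod_congr rfl fun j _ => ?_
  by_cases hij : i < j
  · have hne : π i ≠ π j := fun h => hij.ne (π.injective h)
    by_cases h : π i < π j
    · simp [hij, h, h.le]
    · have h' : π j < π i := lt_of_le_of_ne (not_lt.mp h) hne.symm
      simp [hij, h, h']
  · simp [hij]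

lemma det_exc {R : Type*} [CommRing R] (m : ℕ) (x : Fin (m + 1) → R) :
    (Matrix.of fun i j : Fin (m + 1) => if i < j then x i else 1).det
      = ∏ i : Fin m, (1 - x i.castSucc) := by
  rw [Matrix.det_eq_of_forall_col_eq_smul_add_pred
    (B := Matrix.of fun i j : Fin (m + 1) =>
      if j = 0 then 1 else if (j : ℕ) = i + 1 then x i - 1 else 0) (c := fun _ => 1)]
  · rw [Matrix.det_succ_row _ (Fin.last m), Finset.sum_eq_single 0]
    · have : (Matrix.of fun i j : Fin (m + 1) =>
          if j = 0 then (1 : R) else if (j : ℕ) = i + 1 then x i - 1 else 0).submatrix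
          (Fin.last m).succAbove (Fin.succAbove 0) =
          Matrix.diagonal fun i : Fin m => x i.castSucc - 1 := by
        ext i j
        by_cases hij : i = j
        · subst hij
          simp
        · have h1 : (j : ℕ) ≠ i := fun h => hij (Fin.ext h.symm)
          simp [hij, h1]
      rw [this, Matrix.det_diagonal]
      have h : ∀ i : Fin m, (1 - x i.castSucc) = (-1) * (x i.castSucc - 1) := fun i => by ring
      simp [h, Finset.prod_mul_distrib, -neg_sub, -neg_mul]
    · intro j _ hj
      have := j.isLt
      have h2 : (j : ℕ) ≠ m + 1 := by omega
      simp [hj, h2]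
    · simp
  · intro i
    simp
  · intro i j
    simp only [Matrix.of_apply, Fin.lt_def, Fin.val_succ, Fin.val_castSucc, Fin.succ_ne_zero]
    split_ifs <;> first | omega | (simp; done) | (exfalso; omega)

/-- Here `Fin n` represents `[n]` via `i ↦ i + 1`; the right-hand side is
the product of `1 - x_j` over `j = 1, …, n - 1`, i.e. over indices
`j : Fin n` with `(j : ℕ) < n - 1`. -/
theorem stmt7 (n : ℕ) (hn : 1 ≤ n) :
    ∑ π : Equiv.Perm (Fin n),
      ((-1 : MvPolynomial (Fin n) ℤ) ^ inversions π) * ∏ j ∈ EXCi π, X j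
    = ∏ j ∈ Finset.univ.filter (fun j : Fin n => (j : ℕ) < n - 1),
        (1 - (X j : MvPolynomial (Fin n) ℤ)) := by
  obtain ⟨m, rfl⟩ : ∃ m, n = m + 1 := ⟨n - 1, by omega⟩
  have h := det_exc m (fun i => (X i : MvPolynomial (Fin (m + 1)) ℤ))
  rw [← Matrix.det_transpose, Matrix.det_apply'] at h
  have h3 : ∏ j ∈ Finset.univ.filter (fun j : Fin (m + 1) => (j : ℕ) < m + 1 - 1),
        (1 - (X j : MvPolynomial (Fin (m + 1)) ℤ)) = ∏ i : Fin m, (1 - X i.castSucc) := by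
    rw [Finset.prod_filter, Fin.prod_univ_castSucc]
    simp
  rw [h3, ← h]
  refine Finset.sum_congr rfl fun π _ => ?_
  rw [sign_inversions]
  simp [EXCi, Finset.prod_filter]
end

section
/- For every integer n ≥ 1, ∑_{π ∈ S_n^e} t^{exc(π)} - ∑_{π ∈ S_n^o} t^{exc(π)} = (1-t)^{n-1}, where S_n^e and S_n^o are the sets of even and odd permutations of [n], respectively. -/
open Finset MvPolynomial

theorem sign_eq_inversions {n : ℕ} (π : Equiv.Perm (Fin n)) :
    Equiv.Perm.sign π = (-1 : ℤˣ) ^ inversions π := by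
  rw [Equiv.Perm.sign_eq_prod_prod_Ioi]
  unfold inversions
  rw [Finset.prod_sigma', ← Finset.prod_const]
  rw [Finset.prod_filter]
  rw [Fintype.prod_prod_type, Finset.prod_sigma]
  refine Finset.prod_congr rfl fun i _ => ?_
  have : (Finset.Ioi i) = Finset.univ.filter (fun j => i < j) := by ext; simp
  rw [this, Finset.prod_filter]
  refine Finset.prod_congr rfl fun j _ => ?_
  by_cases hij : i < j
  · have hne : π i ≠ π j := fun h => hij.ne (π.injective h)
    by_cases h2 : π i < π j
    · simp [hij, h2, h2.le, not_lt.mpr h2.le]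
    · have : π j < π i := lt_of_le_of_ne (not_lt.mp h2) hne.symm
      simp [hij, h2, this]
  · simp [hij]

theorem det_aux (m : ℕ) :
    (Matrix.of fun i j : Fin (m+1) => if j < i then (Polynomial.X : Polynomial ℤ) else 1).det
      = (1 - Polynomial.X) ^ m := by
  rw [Matrix.det_eq_of_forall_col_eq_smul_add_pred (B := Matrix.of fun i j : Fin (m+1) =>
    if j = 0 then (if j < i then (Polynomial.X : Polynomial ℤ) else 1)
    else if i = j then 1 - Polynomial.X else 0) (fun _ => 1)]
  · rw [Matrix.det_of_lowerTriangular]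
    · rw [Fin.prod_univ_succ]
      simp
    · intro i j hij
      have hij : i < j := hij
      have : j ≠ 0 := by rintro rfl; simp at hij
      simp [this, hij.ne]
  · intro i; simp
  · intro i j
    simp only [Matrix.of_apply, Fin.lt_def, Fin.ext_iff, Fin.val_succ,
      Fin.val_castSucc, Fin.val_zero, Nat.succ_ne_zero, if_false]
    split_ifs <;> first | omega | ring

theorem stmt8 (n : ℕ) (hn : 1 ≤ n) :
    (∑ π ∈ Finset.univ.filter (fun π : Equiv.Perm (Fin n) => Even (inversions π)),
        (Polynomial.X : Polynomial ℤ) ^ (EXCi π).card)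
      - (∑ π ∈ Finset.univ.filter (fun π : Equiv.Perm (Fin n) => ¬ Even (inversions π)),
          (Polynomial.X : Polynomial ℤ) ^ (EXCi π).card)
    = (1 - Polynomial.X) ^ (n - 1) := by
  obtain ⟨m, rfl⟩ : ∃ m, n = m + 1 := ⟨n - 1, by omega⟩
  rw [Nat.add_sub_cancel, ← det_aux, Matrix.det_apply', Finset.sum_filter, Finset.sum_filter,
    ← Finset.sum_sub_distrib]
  refine Finset.sum_congr rfl fun π _ => ?_
  have hp : ∏ i, (Matrix.of fun i j : Fin (m+1) =>
      if j < i then (Polynomial.X : Polynomial ℤ) else 1) (π i) i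
      = (Polynomial.X : Polynomial ℤ) ^ (EXCi π).card := by
    simp only [Matrix.of_apply, EXCi]
    rw [← Finset.prod_filter, Finset.prod_const]
  rw [hp, sign_eq_inversions]
  by_cases h : Even (inversions π)
  · simp [h]
  · simp [h, (Nat.not_even_iff_odd.mp h).neg_one_pow]
end
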